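/- arXiv:1712.06441 — 3 statements merged into one kernel-verified Lean document; each statement's English description precedes it below -/
import Mathlib

section
/- Let W be a real vector space, let a and a_h be symmetric bilinear forms on W satisfying a(v,v) ≥ 0 and 0 ≤ a_h(v,v) ≤ α^*·a(v,v) for all v ∈ W (with α^* > 0), and let P ⊆ W satisfy a_h(p, v) = a(p, v) for all p ∈ P and all v ∈ W. Then for every w ∈ W and every p ∈ P, |a_h(w, w) − a(w, w)| ≤ (1 + α^*)·a(w − p, w − p). -/
theorem apply_sub_sub_eq_apply_self_of_mem_ker {R S V N : Type*} [CommSemiring R] [CommSemiring S]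
    [AddCommGroup V] [Module S V] [AddCommGroup N] [Module R N] {σ τ : S →+* R}
    {B : V →ₛₗ[σ] V →ₛₗ[τ] N} (hB : B.IsRefl) {p : V} (hp : p ∈ B.ker) (w : V) :
    B (w - p) (w - p) = B w w := by
  have hleft (v : V) : B p v = 0 := by rw [LinearMap.mem_ker.mp hp, LinearMap.zero_apply]
  have hright : B w p = 0 := hB p w (hleft w)
  simp only [map_sub, LinearMap.sub_apply, hleft, hright, sub_zero]

theorem abs_sub_le_one_add_mul {R : Type*} [Ring R] [LinearOrder R] [IsOrderedRing R]
    {x y c : R} (hx : 0 ≤ x) (hy : 0 ≤ y) (hxy : x ≤ c * y) :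
    |x - y| ≤ (1 + c) * y :=
  calc
    |x - y| ≤ |x| + |y| := abs_sub x y
    _ = x + y := by rw [abs_of_nonneg hx, abs_of_nonneg hy]
    _ ≤ c * y + y := by gcongr
    _ = (1 + c) * y := by rw [add_mul, one_mul, add_comm]

theorem stmt_9_general {R W : Type*} [CommRing R] [LinearOrder R] [IsOrderedRing R]
    [AddCommGroup W] [Module R W] (a a_h : LinearMap.BilinForm R W)
    (hrefl : (a_h - a).IsRefl) (α_star : R)
    (ha_nonneg : ∀ v : W, 0 ≤ a v v)
    (hstab : ∀ v : W, 0 ≤ a_h v v ∧ a_h v v ≤ α_star * a v v)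
    (P : Set W) (hconsist : ∀ p ∈ P, ∀ v : W, a_h p v = a p v) (w : W) {p : W} (hp : p ∈ P) :
    |a_h w w - a w w| ≤ (1 + α_star) * a (w - p) (w - p) := by
  have hker : p ∈ (a_h - a).ker :=
    LinearMap.mem_ker.mpr (LinearMap.ext fun v ↦ sub_eq_zero.mpr (hconsist p hp v))
  have hshift : a_h (w - p) (w - p) - a (w - p) (w - p) = a_h w w - a w w :=
    apply_sub_sub_eq_apply_self_of_mem_ker hrefl hker w
  obtain ⟨hah_nonneg, hah_le⟩ := hstab (w - p)
  rw [← hshift]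
  exact abs_sub_le_one_add_mul hah_nonneg (ha_nonneg (w - p)) hah_le

/-- quantitative consistency bound
`|a_h w w − a w w| ≤ (1 + α^*) * a (w−p) (w−p)` for any `p` in the consistency set `P`. -/
theorem stmt_9
    {W : Type*} [AddCommGroup W] [Module ℝ W]
    (a a_h : LinearMap.BilinForm ℝ W)
    (ha_symm : ∀ u v : W, a u v = a v u)
    (hah_symm : ∀ u v : W, a_h u v = a_h v u)
    (α_star : ℝ) (hα_star : 0 < α_star)
    (ha_nonneg : ∀ v : W, 0 ≤ a v v)
    (hstab : ∀ v : W, 0 ≤ a_h v v ∧ a_h v v ≤ α_star * a v v)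
    (P : Set W)
    (hconsist : ∀ p ∈ P, ∀ v : W, a_h p v = a p v) :
    ∀ w : W, ∀ p ∈ P,
      |a_h w w - a w w| ≤ (1 + α_star) * a (w - p) (w - p) := by
  have hrefl : (a_h - a).IsRefl := fun u v huv ↦ by
    rwa [LinearMap.sub_apply, LinearMap.sub_apply, hah_symm v u, ha_symm v u]
  exact fun w _ hp ↦ stmt_9_general a a_h hrefl α_star ha_nonneg hstab P hconsist w hp
end

section
/- Let V be a real vector space, V_h ⊆ V a subspace, a and b symmetric bilinear forms on V, and a_h and b_h symmetric bilinear forms on V_h. Suppose w ∈ V and λ ∈ ℝ satisfy a(w, v) = λ·b(w, v) for all v ∈ V, and w_h ∈ V_h and λ_h ∈ ℝ satisfy a_h(w_h, v) = λ_h·b_h(w_h, v) for all v ∈ V_h. Then (λ_h − λ)·b(w_h, w_h) = a(w − w_h, w − w_h) − λ·b(w − w_h, w − w_h) + a_h(w_h, w_h) − a(w_h, w_h) + λ_h·[b(w_h, w_h) − b_h(w_h, w_h)]. -/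
/-!
The residual form `c = a - λ b` has `w` in its radical, so replacing `w_h` by `w - w_h` does not
change its diagonal value: `c(w - w_h, w - w_h) = c(w_h, w_h)`. In the sum on the right-hand side
of (4.5) the terms `a(w_h, w_h)` cancel, and those in `a_h` and `b_h` cancel by the discrete
eigenvalue equation tested with `w_h` itself.
-/

theorem apply_sub_sub_of_isRefl_of_apply_eq_zero {R S M P : Type*} [CommSemiring R]
    [CommSemiring S] [AddCommGroup M] [Module S M] [AddCommGroup P] [Module R P]
    {I₁ I₂ : S →+* R} {B : M →ₛₗ[I₁] M →ₛₗ[I₂] P} (hB : B.IsRefl) {x : M} (hx : B x = 0)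
    (y : M) : B (x - y) (x - y) = B y y := by
  have left_zero (z : M) : B x z = 0 := by rw [hx, LinearMap.zero_apply]
  have right_zero (z : M) : B z x = 0 := hB x z (left_zero z)
  simp only [map_sub, LinearMap.sub_apply, left_zero, right_zero, zero_sub, neg_zero, neg_neg]

section Eigenvalue

variable {R V : Type*} [CommRing R] [AddCommGroup V] [Module R V] {I₁ I₂ : R →+* R}

theorem apply_sub_sub_sub_mul_of_eigenpair {a b : V →ₛₗ[I₁] V →ₛₗ[I₂] R} {lam : R}
    (hrefl : (a - lam • b).IsRefl) {w : V} (hw : ∀ v, a w v = lam * b w v) (x : V) :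
    a (w - x) (w - x) - lam * b (w - x) (w - x) = a x x - lam * b x x := by
  have residual_eq_zero : (a - lam • b) w = 0 := LinearMap.ext fun v ↦ sub_eq_zero.2 (hw v)
  exact apply_sub_sub_of_isRefl_of_apply_eq_zero hrefl residual_eq_zero x

/-- Reflexivity of `a - lam • b` covers symmetric `a` and `b`, and also Hermitian `a` and `b` with
`lam` fixed by the conjugation. -/
theorem stmt_10_general (V_h : Submodule R V) (a b : V →ₛₗ[I₁] V →ₛₗ[I₂] R)
    (a_h b_h : V_h →ₛₗ[I₁] V_h →ₛₗ[I₂] R) (w : V) (lam : R) (hrefl : (a - lam • b).IsRefl)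
    (hw : ∀ v : V, a w v = lam * b w v)
    (w_h : V_h) (lam_h : R) (hw_h : ∀ v : V_h, a_h w_h v = lam_h * b_h w_h v) :
    (lam_h - lam) * b (w_h : V) (w_h : V) =
      a (w - (w_h : V)) (w - (w_h : V)) - lam * b (w - (w_h : V)) (w - (w_h : V))
        + (a_h w_h w_h - a (w_h : V) (w_h : V))
        + lam_h * (b (w_h : V) (w_h : V) - b_h w_h w_h) := by
  rw [apply_sub_sub_sub_mul_of_eigenpair hrefl hw, hw_h w_h]
  ring

end Eigenvalue

/-- the algebraic eigenvalue-error identity (4.5) of the paper: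
`(λ_h − λ)·b(w_h, w_h) = a(w − w_h, w − w_h) − λ·b(w − w_h, w − w_h)
  + a_h(w_h, w_h) − a(w_h, w_h) + λ_h·[b(w_h, w_h) − b_h(w_h, w_h)]`. -/
theorem stmt_10
    {V : Type*} [AddCommGroup V] [Module ℝ V]
    (V_h : Submodule ℝ V)
    (a b : LinearMap.BilinForm ℝ V)
    (ha_symm : ∀ u v : V, a u v = a v u)
    (hb_symm : ∀ u v : V, b u v = b v u)
    (a_h b_h : LinearMap.BilinForm ℝ V_h)
    (hah_symm : ∀ u v : V_h, a_h u v = a_h v u)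
    (hbh_symm : ∀ u v : V_h, b_h u v = b_h v u)
    (w : V) (lam : ℝ) (hw : ∀ v : V, a w v = lam * b w v)
    (w_h : V_h) (lam_h : ℝ) (hw_h : ∀ v : V_h, a_h w_h v = lam_h * b_h w_h v) :
    (lam_h - lam) * b (w_h : V) (w_h : V) =
      a (w - (w_h : V)) (w - (w_h : V)) - lam * b (w - (w_h : V)) (w - (w_h : V))
        + (a_h w_h w_h - a (w_h : V) (w_h : V))
        + lam_h * (b (w_h : V) (w_h : V) - b_h w_h w_h) :=
  stmt_10_general V_h a b a_h b_h w lam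
    (LinearMap.BilinForm.IsSymm.sub ⟨ha_symm⟩ (.smul lam ⟨hb_symm⟩)).isRefl hw w_h lam_h hw_h
end

section
/- Let V be a real normed space, V_h ⊆ V a subspace, a and b symmetric bilinear forms on V with |a(u,v)| ≤ M_a·‖u‖·‖v‖ and |b(u,v)| ≤ M_b·‖u‖·‖v‖ for all u, v ∈ V, and a_h, b_h symmetric bilinear forms on V_h. Suppose w ∈ V and λ ∈ ℝ satisfy a(w, v) = λ·b(w, v) for all v ∈ V, and w_h ∈ V_h and λ_h ∈ ℝ satisfy a_h(w_h, v) = λ_h·b_h(w_h, v) for all v ∈ V_h, and assume b(w_h, w_h) ≥ c > 0. Then |λ − λ_h| ≤ (1/c)·[(M_a + |λ|·M_b)·‖w − w_h‖² + |a_h(w_h, w_h) − a(w_h, w_h)| + |λ_h|·|b(w_h, w_h) − b_h(w_h, w_h)|]. -/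
/-!
Put `D = a - λ • b`. The eigenvector `w` lies in both the left and the right kernel of `D`, so
`D (w - v) (w - v) = D v v` for every `v`. The residual `D w_h w_h` is therefore quadratic in the
error `w - w_h`. On the other hand `a w_h w_h` agrees with `a_h w_h w_h = λ_h * b_h w_h w_h`, and
this with `λ_h * b w_h w_h`, up to the two consistency errors, so the residual is
`(λ_h - λ) * b w_h w_h` up to these errors.
-/

section Algebra

variable {R M : Type*} [CommRing R] [AddCommGroup M] [Module R M] {σ : R →+* R}

theorem apply_sub_sub_eq_apply_self (B : M →ₛₗ[σ] M →ₗ[R] R) {w : M}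
    (hleft : ∀ u, B w u = 0) (hright : ∀ u, B u w = 0) (v : M) :
    B (w - v) (w - v) = B v v := by
  simp only [map_sub, LinearMap.sub_apply, hleft, hright, zero_sub, sub_zero, neg_neg]

theorem eigenpair_residual_eq_apply_sub_sub (a b : M →ₛₗ[σ] M →ₗ[R] R) {w : M} {lam : R}
    (hleft : ∀ u, a w u = lam * b w u) (hright : ∀ u, a u w = lam * b u w) (v : M) :
    a v v - lam * b v v = a (w - v) (w - v) - lam * b (w - v) (w - v) := by
  have hshift := apply_sub_sub_eq_apply_self (a - lam • b) (w := w)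
    (fun u ↦ by simp [hleft]) (fun u ↦ by simp [hright]) v
  simpa only [LinearMap.sub_apply, LinearMap.smul_apply, smul_eq_mul] using hshift.symm

theorem eigenvalue_error_identity (a b : M →ₛₗ[σ] M →ₗ[R] R) {w : M} {lam : R}
    (hleft : ∀ u, a w u = lam * b w u) (hright : ∀ u, a u w = lam * b u w)
    (v : M) {lam_h α β : R} (hαβ : α = lam_h * β) :
    (lam_h - lam) * b v v =
      a (w - v) (w - v) - lam * b (w - v) (w - v) + (α - a v v) + lam_h * (b v v - β) := by
  rw [← eigenpair_residual_eq_apply_sub_sub a b hleft hright v, hαβ]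
  ring

end Algebra

section Norm

variable {𝕜 V : Type*} [NormedField 𝕜] [SeminormedAddCommGroup V] [Module 𝕜 V] {σ : 𝕜 →+* 𝕜}

theorem norm_apply_self_sub_mul_apply_self_le (a b : V →ₛₗ[σ] V →ₗ[𝕜] 𝕜) {M_a M_b : ℝ}
    (ha : ∀ u, ‖a u u‖ ≤ M_a * ‖u‖ * ‖u‖) (hb : ∀ u, ‖b u u‖ ≤ M_b * ‖u‖ * ‖u‖) (lam : 𝕜) (u : V) :
    ‖a u u - lam * b u u‖ ≤ (M_a + ‖lam‖ * M_b) * ‖u‖ ^ 2 :=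
  calc ‖a u u - lam * b u u‖
      ≤ ‖a u u‖ + ‖lam‖ * ‖b u u‖ := by simpa only [norm_mul] using norm_sub_le _ (lam * b u u)
    _ ≤ M_a * ‖u‖ * ‖u‖ + ‖lam‖ * (M_b * ‖u‖ * ‖u‖) := by gcongr; exacts [ha u, hb u]
    _ = (M_a + ‖lam‖ * M_b) * ‖u‖ ^ 2 := by ring

/-- The scalars `α` and `β` stand for `a_h w_h w_h` and `b_h w_h w_h`: the discrete problem enters
only through its Rayleigh quotient. The two-sided condition on `w` covers symmetric bilinear forms,
and Hermitian forms with real `lam`. -/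
theorem stmt_12_general (a b : V →ₛₗ[σ] V →ₗ[𝕜] 𝕜) {M_a M_b : ℝ}
    (ha : ∀ u, ‖a u u‖ ≤ M_a * ‖u‖ * ‖u‖) (hb : ∀ u, ‖b u u‖ ≤ M_b * ‖u‖ * ‖u‖)
    {w : V} {lam : 𝕜} (hleft : ∀ u, a w u = lam * b w u) (hright : ∀ u, a u w = lam * b u w)
    (v : V) {lam_h α β : 𝕜} (hαβ : α = lam_h * β) {c : ℝ} (hc : 0 < c) (hbv : c ≤ ‖b v v‖) :
    ‖lam - lam_h‖ ≤ (1 / c) *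
      ((M_a + ‖lam‖ * M_b) * ‖w - v‖ ^ 2 + ‖α - a v v‖ + ‖lam_h‖ * ‖b v v - β‖) := by
  rw [one_div_mul_eq_div, le_div_iff₀ hc]
  calc ‖lam - lam_h‖ * c
      ≤ ‖lam - lam_h‖ * ‖b v v‖ := by gcongr
    _ = ‖(lam_h - lam) * b v v‖ := by rw [norm_mul, norm_sub_rev]
    _ ≤ ‖a (w - v) (w - v) - lam * b (w - v) (w - v)‖ + ‖α - a v v‖ + ‖lam_h * (b v v - β)‖ := by
      rw [eigenvalue_error_identity a b hleft hright v hαβ]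
      exact norm_add₃_le
    _ ≤ (M_a + ‖lam‖ * M_b) * ‖w - v‖ ^ 2 + ‖α - a v v‖ + ‖lam_h‖ * ‖b v v - β‖ := by
      rw [norm_mul]
      gcongr
      exact norm_apply_self_sub_mul_apply_self_le a b ha hb lam (w - v)

end Norm

/-- the quantitative eigenvalue error bound (4.10) of the paper:
`|λ − λ_h| ≤ (1/c)·[(M_a + |λ|·M_b)·‖w − w_h‖² + |a_h(w_h,w_h) − a(w_h,w_h)|
  + |λ_h|·|b(w_h,w_h) − b_h(w_h,w_h)|]`. -/
theorem stmt_12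
    {V : Type*} [NormedAddCommGroup V] [NormedSpace ℝ V]
    (V_h : Submodule ℝ V)
    (a b : LinearMap.BilinForm ℝ V) (M_a M_b : ℝ)
    (ha_symm : ∀ u v : V, a u v = a v u)
    (hb_symm : ∀ u v : V, b u v = b v u)
    (ha_bdd : ∀ u v : V, |a u v| ≤ M_a * ‖u‖ * ‖v‖)
    (hb_bdd : ∀ u v : V, |b u v| ≤ M_b * ‖u‖ * ‖v‖)
    (a_h b_h : LinearMap.BilinForm ℝ V_h)
    (hah_symm : ∀ u v : V_h, a_h u v = a_h v u)
    (hbh_symm : ∀ u v : V_h, b_h u v = b_h v u)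
    (w : V) (lam : ℝ) (hw : ∀ v : V, a w v = lam * b w v)
    (w_h : V_h) (lam_h : ℝ) (hw_h : ∀ v : V_h, a_h w_h v = lam_h * b_h w_h v)
    (c : ℝ) (hc : 0 < c) (hbwh : c ≤ b (w_h : V) (w_h : V)) :
    |lam - lam_h| ≤ (1 / c) *
      ((M_a + |lam| * M_b) * ‖w - (w_h : V)‖ ^ 2
        + |a_h w_h w_h - a (w_h : V) (w_h : V)|
        + |lam_h| * |b (w_h : V) (w_h : V) - b_h w_h w_h|) :=
  stmt_12_general a b (fun u ↦ ha_bdd u u) (fun u ↦ hb_bdd u u) hw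
    (fun u ↦ by rw [ha_symm, hb_symm, hw]) w_h (hw_h w_h) hc (hbwh.trans (le_abs_self _))
end
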